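/- arXiv:2003.08009 — 2 statements merged into one kernel-verified Lean document; each statement's English description precedes it below -/
import Mathlib

section
/- (Exact distribution of the number of collisions) Let n and b be positive integers and consider the uniform probability measure on the set of all functions f : Fin n → Fin b. Define the number of collisions C(f) = n - |image f|. Then for every natural number c with n - c ≤ b, the probability that C(f) = c equals (b choose (n-c)) multiplied by the number of surjective functions from Fin n onto Fin (n-c), divided by b^n. -/
open MeasureTheory
open scoped ENNReal

/-!
A function with image `s` is the same thing as a surjection onto `s`, and the number of surjections
onto `s` depends only on the cardinality `m` of `s`. Summing over the `m`-element subsets of the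
codomain counts the functions whose image has `m` elements, and having `c` collisions means
precisely that the image has `|α| - c` elements.
-/

section Counting

open Finset Function

variable {α β γ : Type*} [Fintype α] [DecidableEq β]

theorem image_univ_val_comp_eq_iff_surjective {s : Finset β} {g : α → s} :
    univ.image (Subtype.val ∘ g) = s ↔ Surjective g :=
  calc
    univ.image (Subtype.val ∘ g) = s
      ↔ (univ.image g).image Subtype.val = univ.image Subtype.val := by
        rw [image_image, univ_eq_attach, attach_image_val]
    _ ↔ univ.image g = univ := (image_injective Subtype.val_injective).eq_iff
    _ ↔ Surjective g := by
        rw [← coe_inj, coe_image, coe_univ, coe_univ, Set.image_univ, Set.range_eq_univ]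

variable [DecidableEq α] [Fintype β]

theorem card_filter_surjective_congr [Fintype γ] [DecidableEq γ] (e : β ≃ γ) :
    #{g : α → β | Surjective g} = #{g : α → γ | Surjective g} :=
  card_equiv ((Equiv.refl α).arrowCongr e) fun g ↦ by
    rw [mem_filter_univ, mem_filter_univ]
    exact (e.comp_surjective g).symm

theorem card_filter_image_eq (s : Finset β) :
    #{f : α → β | univ.image f = s} = #{g : α → s | Surjective g} := by
  symm
  refine card_bij (fun g _ ↦ Subtype.val ∘ g) (fun g hg ↦ ?_)
    (fun _ _ _ _ h ↦ Subtype.val_injective.comp_left h) fun f hf ↦ ?_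
  · simpa [image_univ_val_comp_eq_iff_surjective] using hg
  · rw [mem_filter_univ] at hf
    have hmem (x : α) : f x ∈ s := hf ▸ mem_image_of_mem f (mem_univ x)
    lift f to α → s using hmem
    exact ⟨f, by simpa using image_univ_val_comp_eq_iff_surjective.mp hf, rfl⟩

theorem card_filter_card_image_eq (m : ℕ) :
    #{f : α → β | #(univ.image f) = m} =
      (Fintype.card β).choose m * #{g : α → Fin m | Surjective g} := by
  have fiber_card : ∀ s ∈ univ.powersetCard m,
      #{f : α → β | univ.image f = s} = #{g : α → Fin m | Surjective g} := fun s hs ↦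
    (card_filter_image_eq s).trans <|
      card_filter_surjective_congr (s.equivFinOfCardEq (mem_powersetCard_univ.mp hs))
  calc
    #{f : α → β | #(univ.image f) = m}
      = ∑ s ∈ univ.powersetCard m, #{f : α → β | univ.image f = s} := by
        simp [sum_card_fiberwise_eq_card_filter]
    _ = #(univ.powersetCard m : Finset (Finset β)) * #{g : α → Fin m | Surjective g} :=
        sum_const_nat fiber_card
    _ = (Fintype.card β).choose m * #{g : α → Fin m | Surjective g} := by
        rw [card_powersetCard, card_univ]

end Counting

section Collisions

variable {α β : Type*} [Fintype α] [DecidableEq β]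

/-- The number of collisions of `f`: how much smaller its image is than its domain. The
subtraction never truncates, as the image has at most as many elements as the domain. -/
def collisionCount (f : α → β) : ℕ :=
  Fintype.card α - (Finset.univ.image f).card

-- For `c` at least `Fintype.card α` both sides are false, because the image is not empty.
theorem collisionCount_eq_iff [Nonempty α] {f : α → β} {c : ℕ} :
    collisionCount f = c ↔ (Finset.univ.image f).card = Fintype.card α - c := by
  have card_le : (Finset.univ.image f).card ≤ Fintype.card α := Finset.card_image_le
  have card_pos : 0 < (Finset.univ.image f).card := (Finset.univ_nonempty.image f).card_pos
  unfold collisionCount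
  omega

end Collisions

theorem toReal_toMeasure_uniformOfFintype_setOf {Ω : Type*} [Fintype Ω] [Nonempty Ω]
    [MeasurableSpace Ω] [MeasurableSingletonClass Ω] (p : Ω → Prop) [DecidablePred p] :
    ((PMF.uniformOfFintype Ω).toMeasure {ω | p ω}).toReal =
      (Finset.univ.filter p).card / Fintype.card Ω := by
  rw [PMF.toMeasure_uniformOfFintype_apply _ (Set.toFinite _).measurableSet, ENNReal.toReal_div,
    ENNReal.toReal_natCast, ENNReal.toReal_natCast]
  exact congrArg (fun k : ℕ ↦ (k : ℝ) / Fintype.card Ω) (Fintype.card_subtype p)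

theorem stmt7_general {α β : Type*} [Fintype α] [DecidableEq α] [Nonempty α] [Fintype β]
    [DecidableEq β] [Nonempty β] [MeasurableSpace β] [MeasurableSingletonClass β] (c : ℕ) :
    ((PMF.uniformOfFintype (α → β)).toMeasure {f | collisionCount f = c}).toReal =
      ((Fintype.card β).choose (Fintype.card α - c) *
          (Finset.univ.filter
            (fun g : α → Fin (Fintype.card α - c) ↦ Function.Surjective g)).card : ℝ)
        / (Fintype.card β : ℝ) ^ Fintype.card α := by
  simp only [collisionCount_eq_iff]
  rw [toReal_toMeasure_uniformOfFintype_setOf, card_filter_card_image_eq, Fintype.card_fun,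
    Nat.cast_mul, Nat.cast_pow]

/-- (Exact distribution of the number of collisions) Under the uniform probability measure
on all functions `f : Fin n → Fin b` (`n, b` positive), with number of collisions
`C(f) = n - |image f|`, for every natural number `c` with `n - c ≤ b` the probability that
`C(f) = c` equals `(b choose (n - c))` times the number of surjective functions from `Fin n`
onto `Fin (n - c)`, divided by `b^n`. -/
theorem stmt7 (n b : ℕ) (hn : 0 < n) (hb : 0 < b) [NeZero b] (c : ℕ) (hc : n - c ≤ b) :
    (((PMF.uniformOfFintype (Fin n → Fin b)).toMeasure
        {f | n - (Finset.univ.image f).card = c}).toReal)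
      = (b.choose (n - c) *
          (Finset.univ.filter
            (fun g : Fin n → Fin (n - c) => Function.Surjective g)).card : ℝ)
        / (b : ℝ) ^ n := by
  have : Nonempty (Fin n) := Fin.pos_iff_nonempty.mp hn
  have general := stmt7_general (α := Fin n) (β := Fin b) c
  unfold collisionCount at general
  rwa [Fintype.card_fin, Fintype.card_fin] at general
end

section
/- For a fixed positive integer n, the expected number of collisions g(b) = n - b·(1 - (1 - 1/b)^n) (viewed as a real-valued function of a real variable b ≥ 1) is a nonincreasing function of b; that is, for all real numbers 1 ≤ b₁ ≤ b₂, one has n - b₂·(1 - (1 - 1/b₂)^n) ≤ n - b₁·(1 - (1 - 1/b₁)^n). -/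
/-!
The expected number of occupied buckets, `b * (1 - (1 - 1/b)^n)`, equals the geometric sum
`∑ i < n, (1 - 1/b)^i`, whose `i`-th term is the probability that a draw hits a bucket missed by
the `i` draws before it. For `b ≥ 1` the ratio `1 - 1/b` is nonnegative and nondecreasing in `b`,
so every term is nondecreasing and the number of collisions is nonincreasing.
-/

lemma mul_one_sub_pow_eq_geom_sum {K : Type*} [DivisionRing K] {b : K} (hb : b ≠ 0) (n : ℕ) :
    b * (1 - (1 - 1 / b) ^ n) = ∑ i ∈ Finset.range n, (1 - 1 / b) ^ i := by
  rw [← mul_neg_geom_sum, sub_sub_cancel, ← mul_assoc, mul_one_div_cancel hb, one_mul]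

lemma monotoneOn_geom_sum {R : Type*} [Semiring R] [PartialOrder R] [IsOrderedRing R] (n : ℕ) :
    MonotoneOn (fun x : R ↦ ∑ i ∈ Finset.range n, x ^ i) (Set.Ici 0) :=
  fun _ hx _ _ hxy ↦ Finset.sum_le_sum fun i _ ↦ pow_le_pow_left₀ hx hxy i

theorem stmt8_general {K : Type*} [DivisionRing K] [LinearOrder K] [IsStrictOrderedRing K] (n : ℕ) :
    AntitoneOn (fun b : K ↦ n - b * (1 - (1 - 1 / b) ^ n)) (Set.Ici 1) := by
  intro b₁ (hb₁ : 1 ≤ b₁) b₂ (hb₂ : 1 ≤ b₂) hb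
  have b₁_pos : 0 < b₁ := one_pos.trans_le hb₁
  have b₂_pos : 0 < b₂ := one_pos.trans_le hb₂
  have ratio_nonneg : 0 ≤ 1 - 1 / b₁ := sub_nonneg.2 ((div_le_one₀ b₁_pos).2 hb₁)
  have ratio_le : 1 - 1 / b₁ ≤ 1 - 1 / b₂ := by gcongr
  simp only [mul_one_sub_pow_eq_geom_sum b₁_pos.ne', mul_one_sub_pow_eq_geom_sum b₂_pos.ne']
  exact sub_le_sub_left
    (monotoneOn_geom_sum n ratio_nonneg (ratio_nonneg.trans ratio_le) ratio_le) _

/-- For a fixed positive integer `n`, the expected number of collisions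
`g(b) = n - b * (1 - (1 - 1/b)^n)`, as a real-valued function of a real variable `b ≥ 1`,
is nonincreasing in `b`. -/
theorem stmt8 (n : ℕ) (hn : 0 < n) (b₁ b₂ : ℝ) (hb₁ : 1 ≤ b₁) (hb : b₁ ≤ b₂) :
    (n : ℝ) - b₂ * (1 - (1 - 1 / b₂) ^ n) ≤ (n : ℝ) - b₁ * (1 - (1 - 1 / b₁) ^ n) :=
  stmt8_general n hb₁ (hb₁.trans hb) hb
end
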